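/- Let (t,s) ∈ ℝ × ℝⁿ with s in the affine span of s₁,…,s_m, and let 𝔛′ = {(b,x) ∈ 𝔛 : ‖s − x‖² = (t − b)²} be the solution set of the system enlarged by the pair (t,s). Then 𝔛′ = 𝔛 if (t − b₀)² = ‖s − v‖² + β − ‖v‖², and 𝔛′ = ∅ otherwise. -/

import Mathlib

open scoped RealInnerProductSpace

/-!
A solution `(b, x)` puts every `(tᵢ, sᵢ)` on the light cone with apex `(b, x)`, while `v`, `b₀`, `β`
put every `(tᵢ, sᵢ)` on the hyperboloid `(t - b₀)² = ‖s - v‖² + c`, where `c = β - ‖v‖²`. The two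
quadrics have the same leading part, so subtracting their equations leaves an affine relation
between `tᵢ` and `sᵢ`. If `b ≠ b₀`, that relation expresses `tᵢ` as an affine function of `sᵢ`, and
affine independence of the `(tᵢ, sᵢ)` descends to the `sᵢ`. Hence `b = b₀`, the relation becomes
`‖sᵢ - x‖² = ‖sᵢ - v‖² + c`, and being affine it extends to the whole affine span of the `sᵢ`.
-/

theorem affineIndependent_of_affineIndependent_graph {k V₁ P₁ V₂ P₂ ι : Type*} [Ring k]
    [AddCommGroup V₁] [Module k V₁] [AddTorsor V₁ P₁] [AddCommGroup V₂] [Module k V₂]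
    [AddTorsor V₂ P₂] {s : ι → P₁} (f : P₁ →ᵃ[k] P₂)
    (h : AffineIndependent k fun i => (f (s i), s i)) : AffineIndependent k s :=
  h.of_comp (f.prod (AffineMap.id k P₁))

section EuclideanAffineSpace

variable {V P ι : Type*} [SeminormedAddCommGroup V] [InnerProductSpace ℝ V] [PseudoMetricSpace P]
  [NormedAddTorsor V P]

/-- The difference of the squared distances to `x` and to `v`, as an affine map: the quadratic parts
cancel. -/
noncomputable def distSqSubDistSq (x v : P) : P →ᵃ[ℝ] ℝ where
  toFun y := dist y x ^ 2 - dist y v ^ 2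
  linear := (2 : ℝ) • innerₛₗ ℝ (v -ᵥ x)
  map_vadd' y u := by
    have dist_sq_vadd (z : P) :
        dist (u +ᵥ y) z ^ 2 = ‖u‖ ^ 2 + 2 * ⟪u, y -ᵥ z⟫ + dist y z ^ 2 := by
      rw [dist_eq_norm_vsub V, dist_eq_norm_vsub V, vadd_vsub_assoc, norm_add_sq_real]
    have inner_vsub : ⟪v -ᵥ x, u⟫ = ⟪u, y -ᵥ x⟫ - ⟪u, y -ᵥ v⟫ := by
      rw [← inner_sub_right, vsub_sub_vsub_cancel_left, real_inner_comm]
    simp only [dist_sq_vadd, LinearMap.smul_apply, innerₛₗ_apply_apply, inner_vsub, smul_eq_mul,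
      vadd_eq_add]
    ring

theorem distSqSubDistSq_apply (x v y : P) :
    distSqSubDistSq x v y = dist y x ^ 2 - dist y v ^ 2 :=
  rfl

theorem dist_sq_eq_dist_sq_add_of_mem_affineSpan {S : Set P} {x v σ : P} {c : ℝ}
    (hS : ∀ y ∈ S, dist y x ^ 2 = dist y v ^ 2 + c) (hσ : σ ∈ affineSpan ℝ S) :
    dist σ x ^ 2 = dist σ v ^ 2 + c := by
  have eqOn_const : S.EqOn (distSqSubDistSq x v) (AffineMap.const ℝ P c) := fun y hy => by
    rw [distSqSubDistSq_apply, hS y hy, add_sub_cancel_left, AffineMap.const_apply]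
  have hσc : distSqSubDistSq x v σ = c := AffineMap.eqOn_affineSpan eqOn_const hσ
  rwa [distSqSubDistSq_apply, sub_eq_iff_eq_add'] at hσc

/-- The solution set of the squared global positioning equations with satellites at `s i` and
pseudoranges `t i`; a solution is a pair of a clock bias and a receiver position. -/
def squaredGPSSolutions (s : ι → P) (t : ι → ℝ) : Set (ℝ × P) :=
  {p | ∀ i, dist (s i) p.2 ^ 2 = (t i - p.1) ^ 2}

variable {s : ι → P} {t : ι → ℝ} {b₀ c : ℝ} {v : P} {p : ℝ × P}

theorem fst_eq_of_mem_squaredGPSSolutions (hindep : AffineIndependent ℝ fun i => (t i, s i))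
    (hnindep : ¬ AffineIndependent ℝ s) (hc : ∀ i, (t i - b₀) ^ 2 = dist (s i) v ^ 2 + c)
    (hp : p ∈ squaredGPSSolutions s t) : p.1 = b₀ := by
  obtain ⟨b, x⟩ := p
  by_contra hb
  let f : P →ᵃ[ℝ] ℝ :=
    (2 * (b₀ - b))⁻¹ • (distSqSubDistSq x v - AffineMap.const ℝ P (b ^ 2 - b₀ ^ 2 + c))
  have f_apply (i : ι) : f (s i) = t i := by
    have hsub : b₀ - b ≠ 0 := sub_ne_zero.mpr (Ne.symm hb)
    have relation : dist (s i) x ^ 2 - dist (s i) v ^ 2 - (b ^ 2 - b₀ ^ 2 + c) =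
        2 * (b₀ - b) * t i := by
      linear_combination hp i + hc i
    simp only [f, AffineMap.coe_smul, AffineMap.coe_sub, Pi.smul_apply, Pi.sub_apply,
      AffineMap.const_apply, distSqSubDistSq_apply, relation, smul_eq_mul]
    exact inv_mul_cancel_left₀ (mul_ne_zero two_ne_zero hsub) (t i)
  refine hnindep (affineIndependent_of_affineIndependent_graph f ?_)
  simpa only [f_apply] using hindep

theorem dist_sq_eq_iff_of_mem_squaredGPSSolutions
    (hindep : AffineIndependent ℝ fun i => (t i, s i)) (hnindep : ¬ AffineIndependent ℝ s)
    (hc : ∀ i, (t i - b₀) ^ 2 = dist (s i) v ^ 2 + c) (hp : p ∈ squaredGPSSolutions s t)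
    {τ : ℝ} {σ : P} (hσ : σ ∈ affineSpan ℝ (Set.range s)) :
    dist σ p.2 ^ 2 = (τ - p.1) ^ 2 ↔ (τ - b₀) ^ 2 = dist σ v ^ 2 + c := by
  have hb : p.1 = b₀ := fst_eq_of_mem_squaredGPSSolutions hindep hnindep hc hp
  have hdist : ∀ y ∈ Set.range s, dist y p.2 ^ 2 = dist y v ^ 2 + c := by
    rintro _ ⟨i, rfl⟩
    rw [hp i, hb, hc i]
  rw [hb, dist_sq_eq_dist_sq_add_of_mem_affineSpan hdist hσ, eq_comm]

theorem stmt_16_general (hindep : AffineIndependent ℝ fun i => (t i, s i))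
    (hnindep : ¬ AffineIndependent ℝ s) (hc : ∀ i, (t i - b₀) ^ 2 = dist (s i) v ^ 2 + c)
    (τ : ℝ) {σ : P} (hσ : σ ∈ affineSpan ℝ (Set.range s)) :
    ((τ - b₀) ^ 2 = dist σ v ^ 2 + c →
      {p ∈ squaredGPSSolutions s t | dist σ p.2 ^ 2 = (τ - p.1) ^ 2} = squaredGPSSolutions s t) ∧
    ((τ - b₀) ^ 2 ≠ dist σ v ^ 2 + c →
      {p ∈ squaredGPSSolutions s t | dist σ p.2 ^ 2 = (τ - p.1) ^ 2} = ∅) := by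
  rw [Set.sep_eq_self_iff_mem_true, Set.sep_eq_empty_iff_mem_false]
  exact ⟨fun h _ hp => (dist_sq_eq_iff_of_mem_squaredGPSSolutions hindep hnindep hc hp hσ).mpr h,
    fun h _ hp => mt (dist_sq_eq_iff_of_mem_squaredGPSSolutions hindep hnindep hc hp hσ).mp h⟩

end EuclideanAffineSpace

theorem two_mul_inner_sub_eq_norm_sq_sub_iff {V : Type*} [SeminormedAddCommGroup V]
    [InnerProductSpace ℝ V] (y v : V) (β r : ℝ) :
    2 * ⟪y, v⟫ - β = ‖y‖ ^ 2 - r ↔ r = ‖y - v‖ ^ 2 + (β - ‖v‖ ^ 2) := by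
  rw [norm_sub_sq_real]
  constructor <;> intro h <;> linarith

theorem stmt_16 {n m : ℕ} [NeZero m] (hn : 1 ≤ n)
    (s : Fin m → EuclideanSpace ℝ (Fin n)) (t : Fin m → ℝ)
    (hindep : AffineIndependent ℝ (fun i => ((t i, s i) : ℝ × EuclideanSpace ℝ (Fin n))))
    (hnindep : ¬ AffineIndependent ℝ s)
    (b₀ : ℝ) (v : EuclideanSpace ℝ (Fin n)) (β : ℝ)
    (hv : v ∈ affineSpan ℝ (Set.range s))
    (hβ : ∀ i, 2 * ⟪s i, v⟫ - β = ‖s i‖ ^ 2 - (t i - b₀) ^ 2)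
    (X : Set (ℝ × EuclideanSpace ℝ (Fin n)))
    (hX : X = {p : ℝ × EuclideanSpace ℝ (Fin n) | ∀ i, ‖s i - p.2‖ ^ 2 = (t i - p.1) ^ 2})
    (τ : ℝ) (σ : EuclideanSpace ℝ (Fin n))
    (hσ : σ ∈ affineSpan ℝ (Set.range s))
    (X' : Set (ℝ × EuclideanSpace ℝ (Fin n)))
    (hX' : X' = {p ∈ X | ‖σ - p.2‖ ^ 2 = (τ - p.1) ^ 2}) :
    ((τ - b₀) ^ 2 = ‖σ - v‖ ^ 2 + β - ‖v‖ ^ 2 → X' = X) ∧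
    ((τ - b₀) ^ 2 ≠ ‖σ - v‖ ^ 2 + β - ‖v‖ ^ 2 → X' = ∅) := by
  subst hX' hX
  simp only [two_mul_inner_sub_eq_norm_sq_sub_iff, ← dist_eq_norm, add_sub_assoc] at hβ ⊢
  exact stmt_16_general hindep hnindep hβ τ hσ
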